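/- arXiv:2602.10693 — 3 statements merged into one kernel-verified Lean document; each statement's English description precedes it below -/
import Mathlib

section
/- Let Ω be a nonempty finite type, let μ and π be probability mass functions on Ω with μ(τ) > 0 and π(τ) > 0 for all τ, and let W(τ) = π(τ)/μ(τ). Fix α ∈ [0,1] and λ ≥ 0, and define the objective F(Q) = (1−α)·∑_τ Q(τ)·log(Q(τ)/μ(τ)) + α·∑_τ Q(τ)·log(Q(τ)/π(τ)) + λ·∑_τ Q(τ)·W(τ) for probability mass functions Q on Ω (with the convention 0·log 0 = 0). Define Z = ∑_τ μ(τ)^{1−α}·π(τ)^{α}·exp(−λ·W(τ)) and Q*(τ) = μ(τ)^{1−α}·π(τ)^{α}·exp(−λ·W(τ))/Z. Then Z > 0, Q* is a probability mass function on Ω, and for every probability mass function Q on Ω one has F(Q) ≥ F(Q*), with equality if and only if Q = Q*. -/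
/-- The constrained variational problem: the VESPO proposal `Q*` with density
proportional to `μ^(1-α) · π^α · exp(-λ W)` is the unique minimizer of the
penalized mixed-KL objective `F` over probability mass functions on `Ω`. -/
theorem vespo_variational_solution {Ω : Type*} [Fintype Ω] [Nonempty Ω]
    (μ π : Ω → ℝ) (hμpos : ∀ τ, 0 < μ τ) (hπpos : ∀ τ, 0 < π τ)
    (hμ1 : ∑ τ, μ τ = 1) (hπ1 : ∑ τ, π τ = 1)
    (α lam : ℝ) (hα0 : 0 ≤ α) (hα1 : α ≤ 1) (hlam : 0 ≤ lam)
    (W : Ω → ℝ) (hW : ∀ τ, W τ = π τ / μ τ)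
    (F : (Ω → ℝ) → ℝ)
    (hF : ∀ Q : Ω → ℝ, F Q =
      (1 - α) * ∑ τ, Q τ * Real.log (Q τ / μ τ)
      + α * ∑ τ, Q τ * Real.log (Q τ / π τ)
      + lam * ∑ τ, Q τ * W τ)
    (Z : ℝ) (hZ : Z = ∑ τ, μ τ ^ (1 - α) * π τ ^ α * Real.exp (-lam * W τ))
    (Qstar : Ω → ℝ)
    (hQstar : ∀ τ, Qstar τ = μ τ ^ (1 - α) * π τ ^ α * Real.exp (-lam * W τ) / Z) :
    0 < Z ∧ (∀ τ, 0 ≤ Qstar τ) ∧ (∑ τ, Qstar τ = 1) ∧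
      ∀ Q : Ω → ℝ, (∀ τ, 0 ≤ Q τ) → (∑ τ, Q τ = 1) →
        F Qstar ≤ F Q ∧ (F Q = F Qstar ↔ Q = Qstar) := by
  have hpos : ∀ τ, 0 < μ τ ^ (1 - α) * π τ ^ α * Real.exp (-lam * W τ) := fun τ =>
    mul_pos (mul_pos (Real.rpow_pos_of_pos (hμpos τ) _) (Real.rpow_pos_of_pos (hπpos τ) _))
      (Real.exp_pos _)
  have hZpos : 0 < Z := by
    rw [hZ]
    exact Finset.sum_pos (fun τ _ => hpos τ) Finset.univ_nonempty
  have hSpos : ∀ τ, 0 < Qstar τ := fun τ => by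
    rw [hQstar]
    exact div_pos (hpos τ) hZpos
  have hSsum : ∑ τ, Qstar τ = 1 := by
    simp_rw [hQstar]
    rw [← Finset.sum_div, ← hZ, div_self hZpos.ne']
  have hlogS : ∀ τ, Real.log (Qstar τ) =
      (1 - α) * Real.log (μ τ) + α * Real.log (π τ) - lam * W τ - Real.log Z := fun τ => by
    have h1 := (Real.rpow_pos_of_pos (hμpos τ) (1 - α)).ne'
    have h2 := (Real.rpow_pos_of_pos (hπpos τ) α).ne'
    rw [hQstar, Real.log_div (hpos τ).ne' hZpos.ne',
      Real.log_mul (mul_ne_zero h1 h2) (Real.exp_pos _).ne', Real.log_mul h1 h2,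
      Real.log_rpow (hμpos τ), Real.log_rpow (hπpos τ), Real.log_exp]
    ring
  have key : ∀ Q : Ω → ℝ, (∑ τ, Q τ = 1) →
      F Q = ∑ τ, Qstar τ * InformationTheory.klFun (Q τ / Qstar τ) - Real.log Z := by
    intro Q hQ1
    have hterm : ∀ τ, Qstar τ * InformationTheory.klFun (Q τ / Qstar τ) =
        (1 - α) * (Q τ * Real.log (Q τ / μ τ)) + α * (Q τ * Real.log (Q τ / π τ))
          + lam * (Q τ * W τ) + Real.log Z * Q τ + Qstar τ - Q τ := by
      intro τ
      have hS := (hSpos τ).ne'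
      rw [InformationTheory.klFun]
      rcases eq_or_ne (Q τ) 0 with h0 | h0
      · simp [h0]
      · have e : Qstar τ * (Q τ / Qstar τ * Real.log (Q τ / Qstar τ) + 1 - Q τ / Qstar τ) =
            Q τ * Real.log (Q τ / Qstar τ) + Qstar τ - Q τ := by
          field_simp
        rw [e, Real.log_div h0 hS, Real.log_div h0 (hμpos τ).ne',
          Real.log_div h0 (hπpos τ).ne', hlogS]
        ring
    rw [hF, Finset.sum_congr rfl (fun τ _ => hterm τ)]
    simp only [Finset.sum_add_distrib, Finset.sum_sub_distrib, ← Finset.mul_sum]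
    rw [hQ1, hSsum]
    ring
  have hFS : F Qstar = - Real.log Z := by
    rw [key Qstar hSsum]
    have : ∀ τ, Qstar τ / Qstar τ = 1 := fun τ => div_self (hSpos τ).ne'
    simp [this, InformationTheory.klFun]
  refine ⟨hZpos, fun τ => (hSpos τ).le, hSsum, fun Q hQ0 hQ1 => ?_⟩
  have hnn : ∀ τ ∈ Finset.univ, 0 ≤ Qstar τ * InformationTheory.klFun (Q τ / Qstar τ) :=
    fun τ _ => mul_nonneg (hSpos τ).le
      (InformationTheory.klFun_nonneg (div_nonneg (hQ0 τ) (hSpos τ).le))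
  have hk := key Q hQ1
  refine ⟨?_, ?_, ?_⟩
  · have := Finset.sum_nonneg hnn
    linarith
  · intro h
    have h0 : ∑ τ, Qstar τ * InformationTheory.klFun (Q τ / Qstar τ) = 0 := by linarith
    rw [Finset.sum_eq_zero_iff_of_nonneg hnn] at h0
    funext τ
    have h1 := (mul_eq_zero.1 (h0 τ (Finset.mem_univ τ))).resolve_left (hSpos τ).ne'
    rw [InformationTheory.klFun_eq_zero_iff (div_nonneg (hQ0 τ) (hSpos τ).le)] at h1
    exact (div_eq_one_iff_eq (hSpos τ).ne').1 h1
  · intro h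
    rw [h]
end

section
/- Let Ω be a finite type, let μ be a probability mass function on Ω with μ(τ) > 0 for all τ, let A : Ω → ℝ, and for θ ∈ ℝ let π_θ : Ω → (0,∞) be such that θ ↦ π_θ(τ) is differentiable for each τ. Set W_θ(τ) = π_θ(τ)/μ(τ). Let f : (0,∞) → ℝ be differentiable with f'(w) = φ(w)/w for a function φ : (0,∞) → ℝ. Then for every θ, the derivative in θ of ∑_τ μ(τ)·f(W_θ(τ))·A(τ) equals ∑_τ μ(τ)·φ(W_θ(τ))·A(τ)·(d/dθ) log π_θ(τ). -/
/-- Surrogate-objective interpretation: if `f' (w) = φ(w)/w`, then the derivative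
in `θ` of the surrogate `∑ τ, μ(τ)·f(W_θ(τ))·A(τ)` is exactly the reshaped policy
gradient `∑ τ, μ(τ)·φ(W_θ(τ))·A(τ)·(d/dθ) log π_θ(τ)`. -/
theorem reshaped_gradient_is_surrogate_gradient {Ω : Type*} [Fintype Ω]
    (μ : Ω → ℝ) (hμpos : ∀ τ, 0 < μ τ) (hμ1 : ∑ τ, μ τ = 1)
    (A : Ω → ℝ)
    (P : ℝ → Ω → ℝ) (hPpos : ∀ θ τ, 0 < P θ τ)
    (hPdiff : ∀ τ, Differentiable ℝ (fun θ => P θ τ))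
    (W : ℝ → Ω → ℝ) (hW : ∀ θ τ, W θ τ = P θ τ / μ τ)
    (f φ : ℝ → ℝ)
    (hf : ∀ w : ℝ, 0 < w → HasDerivAt f (φ w / w) w) :
    ∀ θ : ℝ, HasDerivAt (fun θ : ℝ => ∑ τ, μ τ * f (W θ τ) * A τ)
      (∑ τ, μ τ * φ (W θ τ) * A τ * deriv (fun θ : ℝ => Real.log (P θ τ)) θ) θ := by
  intro θ
  apply HasDerivAt.fun_sum
  intro τ _
  have hm := hμpos τ
  have hp := hPpos θ τ
  have hP : HasDerivAt (fun θ => P θ τ) (deriv (fun θ => P θ τ) θ) θ :=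
    (hPdiff τ θ).hasDerivAt
  have hlog : deriv (fun θ : ℝ => Real.log (P θ τ)) θ
      = deriv (fun θ => P θ τ) θ / P θ τ := (hP.log hp.ne').deriv
  rw [hlog]
  simp only [hW]
  have hc : HasDerivAt (fun θ => f (P θ τ / μ τ))
      (φ (P θ τ / μ τ) / (P θ τ / μ τ) * (deriv (fun θ => P θ τ) θ / μ τ)) θ :=
    HasDerivAt.comp θ (hf (P θ τ / μ τ) (div_pos hp hm)) (hP.div_const (μ τ))
  have h := (hc.const_mul (μ τ)).mul_const (A τ)
  refine h.congr_deriv ?_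
  generalize deriv (fun θ => P θ τ) θ = d
  generalize φ (P θ τ / μ τ) = e
  have := hm.ne'
  have := hp.ne'
  field_simp
end

section
/- Let T be a natural number, ε ≥ 0, and x_1, …, x_T real numbers with |x_s| ≤ ε for every s. Then |∏_{s=1}^{T}(1 + x_s) − 1 − ∑_{s=1}^{T} x_s| ≤ (1+ε)^T − 1 − T·ε. -/
/-- Zeroth-order and first-order bounds, proved together by induction. -/
theorem product_error_aux (ε : ℝ) (hε : 0 ≤ ε) (T : ℕ) :
    ∀ x : Fin T → ℝ, (∀ s, |x s| ≤ ε) →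
      |(∏ s, (1 + x s)) - 1| ≤ (1 + ε) ^ T - 1 ∧
      |(∏ s, (1 + x s)) - 1 - ∑ s, x s| ≤ (1 + ε) ^ T - 1 - T * ε := by
  induction T with
  | zero => intro x _; simp
  | succ n ih =>
    intro x hx
    obtain ⟨h1, h2⟩ := ih (fun i => x i.succ) (fun i => hx i.succ)
    rw [Fin.prod_univ_succ, Fin.sum_univ_succ]
    have h0 := hx 0
    generalize x 0 = a at *
    generalize (∏ i : Fin n, (1 + x i.succ)) = P at *
    generalize (∑ i : Fin n, x i.succ) = S at *
    have hm : |a * (P - 1)| ≤ ε * ((1 + ε) ^ n - 1) := by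
      rw [abs_mul]
      exact mul_le_mul h0 h1 (abs_nonneg _) hε
    rw [pow_succ]
    push_cast
    rw [abs_le] at h0 h1 h2 hm
    rw [abs_le, abs_le]
    refine ⟨⟨?_, ?_⟩, ⟨?_, ?_⟩⟩ <;> linarith [h0.1, h0.2, h1.1, h1.2, h2.1, h2.2, hm.1, hm.2]

/-- First-order Taylor error for the sequence-level importance weight: if each
`|x_s| ≤ ε`, then the product `∏ (1 + x_s)` deviates from its first-order
expansion `1 + ∑ x_s` by at most `(1+ε)^T - 1 - T·ε`. -/
theorem product_first_order_error (T : ℕ) (ε : ℝ) (hε : 0 ≤ ε)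
    (x : Fin T → ℝ) (hx : ∀ s, |x s| ≤ ε) :
    |(∏ s, (1 + x s)) - 1 - ∑ s, x s| ≤ (1 + ε) ^ T - 1 - T * ε := by
  exact (product_error_aux ε hε T x hx).2
end
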